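/- For all positive integers m and n, the generating function for column strict plane partitions P with 1 ≤ i ≤ n, 1 ≤ j ≤ m, 1 ≤ k ≤ n (i.e., P contained in the box {(i,j,k) : 1 ≤ i ≤ n, 1 ≤ j ≤ m, 1 ≤ k ≤ n}) is given by: ∑_P q^{|P|} = ∏_{1 ≤ i ≤ j ≤ n} (1 − q^{m+i+j−1})/(1 − q^{i+j−1}), as an identity in the formal power series ring ℚ[[q]], where each (1 − q^a)^{−1} denotes the inverse of the unit 1 − q^a. (The Bender–Knuth conjecture.) -/

import Mathlib

open scoped Classical

/-- A plane partition: a finite set of lattice points with positive integer coordinates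
that is downward closed. -/
def IsPlanePartition (P : Finset (ℕ × ℕ × ℕ)) : Prop :=
  (∀ p ∈ P, 1 ≤ p.1 ∧ 1 ≤ p.2.1 ∧ 1 ≤ p.2.2) ∧
    ∀ p ∈ P, ∀ i j k : ℕ,
      1 ≤ i → i ≤ p.1 → 1 ≤ j → j ≤ p.2.1 → 1 ≤ k → k ≤ p.2.2 → (i, j, k) ∈ P

/-- The height of stack `(i,j)`: the largest `k` with `(i,j,k) ∈ P` (0 if none). -/
def stackHeight (P : Finset (ℕ × ℕ × ℕ)) (i j : ℕ) : ℕ :=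
  (P.filter (fun p => p.1 = i ∧ p.2.1 = j)).sup (fun p => p.2.2)

/-- A plane partition is column strict if whenever `i ≥ 2` and `(i,j,1) ∈ P`, the height
of stack `(i,j)` is strictly less than the height of stack `(i-1,j)`. -/
def IsColumnStrict (P : Finset (ℕ × ℕ × ℕ)) : Prop :=
  ∀ i j : ℕ, 2 ≤ i → (i, j, 1) ∈ P → stackHeight P i j < stackHeight P (i - 1) j

/-- The box `B(n₁,n₂,m) = {(i,j,k) : 1 ≤ i ≤ n₁, 1 ≤ j ≤ n₂, 1 ≤ k ≤ m}` as a finset. -/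
def ppBox (n₁ n₂ m : ℕ) : Finset (ℕ × ℕ × ℕ) :=
  Finset.Icc 1 n₁ ×ˢ Finset.Icc 1 n₂ ×ˢ Finset.Icc 1 m

open Finset in
theorem prod_pairs_succAbove {M : Type*} [CommMonoid M] {n : ℕ}
    (f : Fin (n + 1) → Fin (n + 1) → M) (k : Fin (n + 1)) :
    ∏ i, ∏ j ∈ Ioi i, f i j =
      (∏ i, if k.succAbove i < k then f (k.succAbove i) k else f k (k.succAbove i)) *
        ∏ i, ∏ j ∈ Ioi i, f (k.succAbove i) (k.succAbove j) := by
  have key : ∀ {m : ℕ} (g : Fin m → Fin m → M),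
      ∏ i, ∏ j ∈ Ioi i, g i j = ∏ i, ∏ j, if i < j then g i j else 1 := by
    intro m g
    refine prod_congr rfl fun i _ => ?_
    rw [← prod_filter]
    congr 1
    ext j
    simp
  rw [key, key, Fin.prod_univ_succAbove _ k]
  simp_rw [Fin.prod_univ_succAbove _ k, Fin.succAbove_lt_succAbove_iff, prod_mul_distrib]
  rw [← mul_assoc, if_neg (lt_irrefl k), one_mul, ← prod_mul_distrib]
  congr 1
  refine prod_congr rfl fun i _ => ?_
  rcases lt_or_gt_of_ne (Fin.succAbove_ne k i) with h | h
  · simp [h, h.not_gt]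
  · simp [h, h.not_gt]

open Finset in
theorem prod_ite_succAbove_lt_neg_one {R : Type*} [CommRing R] {n : ℕ} (k : Fin (n + 1)) :
    (-1 : R) ^ (k : ℕ) * ∏ i, (if k.succAbove i < k then (1 : R) else -1) = (-1) ^ n := by
  have h1 : (-1 : R) ^ (k : ℕ) = ∏ i : Fin n, (if k.succAbove i < k then (-1 : R) else 1) := by
    simp_rw [Fin.succAbove_lt_iff_castSucc_lt, Fin.lt_def, Fin.val_castSucc]
    rw [Fin.prod_univ_eq_prod_range (fun i => if i < (k : ℕ) then (-1 : R) else 1) n,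
      prod_ite, prod_const, prod_const_one, mul_one]
    congr 1
    rw [show filter (fun i => i < (k : ℕ)) (range n) = range k by
      ext i; simp only [mem_filter, mem_range]; omega]
    simp
  rw [h1, ← prod_mul_distrib]
  rw [prod_congr rfl (g := fun _ => (-1 : R)) (fun i _ => by split_ifs <;> simp)]
  simp

open Finset Matrix in
theorem neg_one_pow_mul_det_vandermonde {R : Type*} [CommRing R] {n : ℕ} (z : Fin (n + 1) → R)
    (k : Fin (n + 1)) :
    (-1) ^ (k : ℕ) * (vandermonde z).det =
      (-1) ^ n * (∏ i, (z k - z (k.succAbove i))) *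
        (vandermonde fun i => z (k.succAbove i)).det := by
  have h : ∏ i, (if k.succAbove i < k then z k - z (k.succAbove i) else z (k.succAbove i) - z k) =
      (∏ i, (if k.succAbove i < k then (1 : R) else -1)) * ∏ i, (z k - z (k.succAbove i)) := by
    rw [← prod_mul_distrib]
    refine prod_congr rfl fun i _ => ?_
    split_ifs <;> ring
  rw [det_vandermonde, det_vandermonde, prod_pairs_succAbove _ k,
    ← prod_ite_succAbove_lt_neg_one k, h]
  ring

open Finset Polynomial in
theorem sum_prod_sub_div_eq {K : Type*} [Field K] {n : ℕ} (y z : Fin (n + 1) → K)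
    (hz : Function.Injective z) (h0 : ∀ i, z i ≠ 0) (h1 : ∀ i, z i ≠ -1) :
    ∑ j, (∏ i, (y i - z j)) / (z j * (z j + 1) * ∏ i, (z j - z (j.succAbove i))) =
      (∏ i, (y i + 1)) / (∏ i, (-1 - z i)) - (∏ i, y i) / ∏ i, (-z i) := by
  set v : Fin (n + 1 + 1 + 1) → K := Fin.cons 0 (Fin.cons (-1) z) with hv
  have hvi : Function.Injective v := by
    rw [hv, Fin.cons_injective_iff, Fin.cons_injective_iff]
    refine ⟨?_, ?_, hz⟩
    · rintro ⟨i, hi⟩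
      revert hi
      refine Fin.cases ?_ (fun i => ?_) i
      · simp
      · simpa using h0 i
    · rintro ⟨i, hi⟩
      exact h1 i hi
  set P : K[X] := ∏ i, (C (y i) - X) with hP
  have hdeg : P.natDegree ≤ n + 1 := by
    rw [hP]
    refine (natDegree_prod_le _ _).trans ?_
    refine (sum_le_card_nsmul _ _ 1 fun i _ => ?_).trans (by simp)
    compute_degree
  have hdeg' : P.degree < (univ : Finset (Fin (n + 1 + 1 + 1))).card := by
    refine lt_of_le_of_lt degree_le_natDegree ?_
    rw [card_univ, Fintype.card_fin]
    exact_mod_cast (by omega)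
  have h := Lagrange.coeff_eq_sum (s := univ) (v := v) hvi.injOn hdeg'
  rw [coeff_eq_zero_of_natDegree_lt (by simp; omega)] at h
  have herase : ∀ i, ∏ j ∈ univ.erase i, (v i - v j) = ∏ k, (v i - v (i.succAbove k)) := by
    intro i
    rw [show (univ.erase i : Finset (Fin (n + 1 + 1 + 1))) = univ.map i.succAboveEmb by
      rw [Fin.univ_succAbove _ i, erase_cons], prod_map]
    rfl
  have heval : ∀ a, P.eval a = ∏ i, (y i - a) := by
    intro a
    simp [hP, eval_prod]
  simp_rw [herase, heval] at h
  have hsplit : ∀ j, ∏ k, (z j - (Fin.cons (-1) z : Fin (n + 1 + 1) → K) (j.succ.succAbove k)) =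
      (z j + 1) * ∏ k, (z j - z (j.succAbove k)) := by
    intro j
    rw [Fin.prod_univ_succ]
    simp
  rw [Fin.sum_univ_succ, Fin.sum_univ_succ] at h
  simp only [hv, Fin.cons_zero, Fin.cons_succ, Fin.zero_succAbove, Fin.prod_univ_succ (n := n + 1),
    Fin.succ_succAbove_zero, Fin.succ_succAbove_succ] at h
  simp only [sub_zero, zero_sub, sub_neg_eq_add, zero_add, one_mul, neg_mul,
    div_neg, hsplit] at h
  simp_rw [mul_assoc]
  linear_combination -h

/-- The Weyl numerator of type `B`, with the powers `x j ^ N` replaced by free variables `t j`. -/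
def weylNumerator {R : Type*} [CommRing R] {n : ℕ} (t x : Fin n → R) : R :=
  (Matrix.of fun j i : Fin n => t j * x j ^ (n - 1 - i : ℕ) - x j ^ (i : ℕ)).det

/-- The reciprocals of the `x j` with `ε j` true, together with the remaining `x j`. -/
def signedPoint {K : Type*} [Field K] {n : ℕ} (x : Fin n → K) (ε : Fin n → Bool) (j : Fin n) : K :=
  if ε j then (x j)⁻¹ else x j

/-- The monomial prefactor of the term of `weylNumerator` indexed by `ε`. -/
def signedWeight {K : Type*} [Field K] {n : ℕ} (t x : Fin n → K) (ε : Fin n → Bool) : K :=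
  ∏ j, if ε j then t j * x j ^ (n - 1) else -1

open Finset Matrix in
theorem weylNumerator_eq_sum {K : Type*} [Field K] {n : ℕ} (t x : Fin n → K)
    (hx : ∀ j, x j ≠ 0) :
    weylNumerator t x =
      ∑ ε : Fin n → Bool, signedWeight t x ε * (vandermonde (signedPoint x ε)).det := by
  have h := (detRowAlternating (n := Fin n) (R := K)).toMultilinearMap.map_sum
    (fun (j : Fin n) (b : Bool) (i : Fin n) =>
      (if b then t j * x j ^ (n - 1) else -1) * (if b then (x j)⁻¹ else x j) ^ (i : ℕ))
  have h1 : (fun j : Fin n => ∑ b : Bool, fun i : Fin n =>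
      (if b then t j * x j ^ (n - 1) else -1) * (if b then (x j)⁻¹ else x j) ^ (i : ℕ)) =
      Matrix.of fun j i : Fin n => t j * x j ^ (n - 1 - i : ℕ) - x j ^ (i : ℕ) := by
    ext j i
    have hi : (i : ℕ) ≤ n - 1 := by omega
    simp [pow_sub₀ _ (hx j) hi]
    ring
  rw [h1] at h
  refine Eq.trans h ?_
  refine sum_congr rfl fun ε _ => ?_
  rw [signedWeight, ← det_mul_column]
  rfl

theorem prod_inv_sub {K : Type*} [Field K] {n : ℕ} (x : Fin n → K) {a : K} (ha : a ≠ 0) :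
    ∏ i, (x i - a⁻¹) = (∏ i, (a * x i - 1)) / a ^ n := by
  rw [eq_div_iff (pow_ne_zero _ ha)]
  conv_lhs => rw [← Fin.prod_const n a]
  rw [← Finset.prod_mul_distrib]
  refine Finset.prod_congr rfl fun i _ => ?_
  field_simp

/-- Non-degeneracy conditions on the variables of the bounded Littlewood identity. -/
structure IsGeneric {K : Type*} [Field K] {n : ℕ} (x : Fin n → K) : Prop where
  injective : Function.Injective x
  ne_zero : ∀ i, x i ≠ 0
  mul_ne_one : ∀ i j, x i * x j ≠ 1

namespace IsGeneric

variable {K : Type*} [Field K] {n : ℕ}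

theorem ne_neg_one {x : Fin n → K} (hx : IsGeneric x) (i : Fin n) : x i ≠ -1 := fun h =>
  hx.mul_ne_one i i (by simp [h])

theorem ne_one {x : Fin n → K} (hx : IsGeneric x) (i : Fin n) : x i ≠ 1 := fun h =>
  hx.mul_ne_one i i (by simp [h])

theorem succAbove {x : Fin (n + 1) → K} (hx : IsGeneric x) (k : Fin (n + 1)) :
    IsGeneric fun i => x (k.succAbove i) :=
  ⟨hx.injective.comp Fin.succAbove_right_injective, fun _ => hx.ne_zero _,
    fun _ _ => hx.mul_ne_one _ _⟩

theorem signedPoint_injective {x : Fin n → K} (hx : IsGeneric x) (ε : Fin n → Bool) :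
    Function.Injective (signedPoint x ε) := by
  intro i j h
  unfold signedPoint at h
  split_ifs at h
  · exact hx.injective (inv_injective h)
  · exact absurd (by rw [← h]; exact mul_inv_cancel₀ (hx.ne_zero i)) (hx.mul_ne_one i j)
  · exact absurd (by rw [h]; exact inv_mul_cancel₀ (hx.ne_zero j)) (hx.mul_ne_one i j)
  · exact hx.injective h

theorem signedPoint_ne_zero {x : Fin n → K} (hx : IsGeneric x) (ε : Fin n → Bool) (i : Fin n) :
    signedPoint x ε i ≠ 0 := by
  unfold signedPoint
  split_ifs
  · exact inv_ne_zero (hx.ne_zero i)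
  · exact hx.ne_zero i

theorem signedPoint_ne_neg_one {x : Fin n → K} (hx : IsGeneric x) (ε : Fin n → Bool) (i : Fin n) :
    signedPoint x ε i ≠ -1 := by
  unfold signedPoint
  split_ifs
  · rw [ne_eq, inv_eq_iff_eq_inv, inv_neg, inv_one]
    exact hx.ne_neg_one i
  · exact hx.ne_neg_one i

open Finset in
theorem sum_signedPoint {x : Fin (n + 1) → K} (hx : IsGeneric x) (ε : Fin (n + 1) → Bool) :
    ∑ j, (if ε j then x j * (x j - 1) * (∏ i, (x j * x (j.succAbove i) - 1)) /
        (x j ^ n * ∏ i, (signedPoint x ε j - signedPoint x ε (j.succAbove i))) else 0) =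
      (-1) ^ n * ((∏ i, if ε i then x i else 1) * ((∏ i, if ε i then x i else 1) - 1)) := by
  have h := sum_prod_sub_div_eq x (signedPoint x ε) (hx.signedPoint_injective ε)
    (hx.signedPoint_ne_zero ε) (hx.signedPoint_ne_neg_one ε)
  have h1 : (∏ i, (x i + 1)) / ∏ i, (-1 - signedPoint x ε i) =
      (-1) ^ (n + 1) * ∏ i, if ε i then x i else 1 := by
    rw [← Fin.prod_const (n + 1) (-1 : K), ← prod_mul_distrib, ← prod_div_distrib]
    refine prod_congr rfl fun i _ => ?_
    have h2 := hx.signedPoint_ne_neg_one ε i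
    have h3 := hx.ne_zero i
    have h4 : -1 - signedPoint x ε i ≠ 0 := fun h => h2 (by linear_combination -h)
    rw [div_eq_iff h4]
    unfold signedPoint
    split_ifs
    · field_simp
      ring
    · ring
  have h2 : (∏ i, x i) / ∏ i, -signedPoint x ε i =
      (-1) ^ (n + 1) * ((∏ i, if ε i then x i else 1) * ∏ i, if ε i then x i else 1) := by
    rw [← Fin.prod_const (n + 1) (-1 : K), ← prod_mul_distrib, ← prod_mul_distrib,
      ← prod_div_distrib]
    refine prod_congr rfl fun i _ => ?_
    have h3 := hx.ne_zero i
    rw [div_eq_iff (neg_ne_zero.2 (hx.signedPoint_ne_zero ε i))]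
    unfold signedPoint
    split_ifs
    · field_simp
    · ring
  rw [h1, h2] at h
  refine Eq.trans (sum_congr rfl fun j _ => ?_) (h.trans (by ring))
  by_cases hj : ε j
  · have h3 := hx.ne_zero j
    have h4 : x j + 1 ≠ 0 := fun h => hx.ne_neg_one j (by linear_combination h)
    have h5 : signedPoint x ε j = (x j)⁻¹ := by simp [signedPoint, hj]
    have h6 : ∏ i, (x j * x i - 1) =
        (x j + 1) * (x j - 1) * ∏ i, (x j * x (j.succAbove i) - 1) := by
      rw [Fin.prod_univ_succAbove _ j]
      ring
    rw [if_pos hj, h5, prod_inv_sub _ h3, h6]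
    have h7 : ∏ i, ((x j)⁻¹ - signedPoint x ε (j.succAbove i)) ≠ 0 := by
      rw [← h5]
      exact prod_ne_zero_iff.2 fun i _ => sub_ne_zero.2 fun h =>
        Fin.succAbove_ne j i (hx.signedPoint_injective ε h).symm
    have h8 : (x j)⁻¹ + 1 = (x j + 1) / x j := by field_simp; ring
    rw [h8]
    generalize ∏ i, ((x j)⁻¹ - signedPoint x ε (j.succAbove i)) = Q at h7 ⊢
    field_simp
    ring
  · rw [if_neg hj, prod_eq_zero (mem_univ j), zero_div]
    simp [signedPoint, hj]

open Finset Matrix in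
theorem signedWeight_recurrence {x : Fin (n + 1) → K} (hx : IsGeneric x) (t : Fin (n + 1) → K)
    (ε : Fin (n + 1) → Bool) :
    ∑ j, (if ε j then (-1) ^ (j : ℕ) * t j *
        ((x j - 1) * ∏ i, (x j * x (j.succAbove i) - 1)) *
        (signedWeight (fun i => t (j.succAbove i)) (fun i => x (j.succAbove i))
            (fun i => ε (j.succAbove i)) *
          (vandermonde (signedPoint (fun i => x (j.succAbove i))
            fun i => ε (j.succAbove i))).det) else 0) =
      ((∏ i, if ε i then x i else 1) - 1) *
        (signedWeight t x ε * (vandermonde (signedPoint x ε)).det) := by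
  set X := ∏ i, if ε i then x i else 1 with hX
  have hX0 : X ≠ 0 := prod_ne_zero_iff.2 fun i _ => by
    split_ifs
    · exact hx.ne_zero i
    · exact one_ne_zero
  have h := hx.sum_signedPoint ε
  rw [← hX] at h
  have hterm : ∀ j, (if ε j then (-1) ^ (j : ℕ) * t j *
        ((x j - 1) * ∏ i, (x j * x (j.succAbove i) - 1)) *
        (signedWeight (fun i => t (j.succAbove i)) (fun i => x (j.succAbove i))
            (fun i => ε (j.succAbove i)) *
          (vandermonde (signedPoint (fun i => x (j.succAbove i))
            fun i => ε (j.succAbove i))).det) else 0) =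
      (-1) ^ n * (signedWeight t x ε * (vandermonde (signedPoint x ε)).det) / X *
      (if ε j then x j * (x j - 1) * (∏ i, (x j * x (j.succAbove i) - 1)) /
        (x j ^ n * ∏ i, (signedPoint x ε j - signedPoint x ε (j.succAbove i))) else 0) := by
    intro j
    by_cases hj : ε j
    swap
    · simp [hj]
    have hxj := hx.ne_zero j
    have h7 : ∏ i, (signedPoint x ε j - signedPoint x ε (j.succAbove i)) ≠ 0 :=
      prod_ne_zero_iff.2 fun i _ => sub_ne_zero.2 fun h =>
        Fin.succAbove_ne j i (hx.signedPoint_injective ε h).symm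
    have hw : signedWeight t x ε * x j = t j * x j ^ n * X *
        signedWeight (fun i => t (j.succAbove i)) (fun i => x (j.succAbove i))
            (fun i => ε (j.succAbove i)) := by
      rw [hX, signedWeight, signedWeight, Fin.prod_univ_succAbove _ j,
        Fin.prod_univ_succAbove (fun i => if ε i then x i else 1) j]
      simp only [hj, if_true]
      have : ∏ i, (if ε (j.succAbove i) then t (j.succAbove i) * x (j.succAbove i) ^ (n + 1 - 1)
          else -1) = (∏ i, if ε (j.succAbove i) then x (j.succAbove i) else 1) *
          ∏ i, if ε (j.succAbove i) then t (j.succAbove i) * x (j.succAbove i) ^ (n - 1)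
          else -1 := by
        rw [← prod_mul_distrib]
        refine prod_congr rfl fun i _ => ?_
        have hn : n + 1 - 1 = n - 1 + 1 := by have := i.pos; omega
        rw [hn]
        split_ifs
        · ring
        · ring
      rw [this, Nat.add_sub_cancel]
      ring
    have hv := neg_one_pow_mul_det_vandermonde (signedPoint x ε) j
    have hs : ((-1 : K) ^ (j : ℕ)) * (-1) ^ (j : ℕ) = 1 := by
      rw [← mul_pow]; simp
    have hn : ((-1 : K) ^ n) * (-1) ^ n = 1 := by
      rw [← mul_pow]; simp
    rw [if_pos hj, if_pos hj]
    change _ * (_ * (vandermonde fun i => signedPoint x ε (j.succAbove i)).det) = _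
    generalize (vandermonde fun i => signedPoint x ε (j.succAbove i)).det = V' at hv ⊢
    generalize ∏ i, (signedPoint x ε j - signedPoint x ε (j.succAbove i)) = Q at h7 hv ⊢
    generalize ∏ i, (x j * x (j.succAbove i) - 1) = P
    generalize (vandermonde (signedPoint x ε)).det = V at hv ⊢
    generalize signedWeight t x ε = W at hw ⊢
    generalize signedWeight (fun i => t (j.succAbove i)) (fun i => x (j.succAbove i))
      (fun i => ε (j.succAbove i)) = W' at hw ⊢
    rw [div_mul_div_comm,
      eq_div_iff (mul_ne_zero hX0 (mul_ne_zero (pow_ne_zero _ hxj) h7))]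
    linear_combination (-(-1) ^ (j : ℕ) * (x j - 1) * P * V' * Q) * hw -
      ((-1) ^ (j : ℕ) * (-1) ^ n * (x j - 1) * P * W * x j) * hv -
      ((-1) ^ (j : ℕ) * Q * V' * (x j - 1) * P * W * x j) * hn +
      ((-1) ^ n * V * (x j - 1) * P * W * x j) * hs
  rw [sum_congr rfl fun j _ => hterm j, ← mul_sum, h]
  have hn : ((-1 : K) ^ n) * (-1) ^ n = 1 := by
    rw [← mul_pow]; simp
  field_simp
  linear_combination (X - 1) * signedWeight t x ε * (vandermonde (signedPoint x ε)).det * hn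

end IsGeneric

theorem weylNumerator_one {R : Type*} [Field R] {n : ℕ} (x : Fin (n + 1) → R) :
    weylNumerator 1 x = 0 := by
  rw [weylNumerator]
  rcases n with _ | n
  · simp
  refine Matrix.exists_mulVec_eq_zero_iff.1 ⟨Pi.single 0 1 + Pi.single (Fin.last _) 1, ?_, ?_⟩
  · intro h
    have := congrFun h 0
    simp [Fin.ext_iff] at this
  · ext j
    simp [Matrix.mulVec_add]

open Finset in
theorem IsGeneric.weylNumerator_mul_sub {K : Type*} [Field K] {n : ℕ} {x : Fin (n + 1) → K}
    (hx : IsGeneric x) (t : Fin (n + 1) → K) :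
    weylNumerator (fun i => t i * x i) x - weylNumerator t x =
      ∑ j : Fin (n + 1), (-1) ^ (j : ℕ) * t j * ((x j - 1) * ∏ i, (x j * x (j.succAbove i) - 1)) *
        weylNumerator (fun i => t (j.succAbove i)) fun i => x (j.succAbove i) := by
  have hw : ∀ ε, signedWeight (fun i => t i * x i) x ε =
      (∏ i, if ε i then x i else 1) * signedWeight t x ε := by
    intro ε
    rw [signedWeight, signedWeight, ← prod_mul_distrib]
    refine prod_congr rfl fun i _ => ?_
    split_ifs <;> ring
  rw [weylNumerator_eq_sum _ _ hx.ne_zero, weylNumerator_eq_sum _ _ hx.ne_zero,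
    ← sum_sub_distrib]
  rw [sum_congr rfl (g := fun ε => ∑ j, (if ε j then (-1) ^ (j : ℕ) * t j *
        ((x j - 1) * ∏ i, (x j * x (j.succAbove i) - 1)) *
        (signedWeight (fun i => t (j.succAbove i)) (fun i => x (j.succAbove i))
            (fun i => ε (j.succAbove i)) *
          (Matrix.vandermonde (signedPoint (fun i => x (j.succAbove i))
            fun i => ε (j.succAbove i))).det) else 0)) fun ε _ => by
    rw [hx.signedWeight_recurrence, hw]; ring]
  rw [sum_comm]
  refine sum_congr rfl fun j _ => ?_
  rw [weylNumerator_eq_sum _ _ (hx.succAbove j).ne_zero, mul_sum,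
    ← (Fin.insertNthEquiv (fun _ => Bool) j).sum_comp, Fintype.sum_prod_type]
  simp

/-- Strictly decreasing sequences of length `n` with entries below `N`. -/
def strictSeqs (n N : ℕ) : Finset (Fin n → ℕ) :=
  (Fintype.piFinset fun _ => Finset.range N).filter StrictAnti

theorem mem_strictSeqs {n N : ℕ} {l : Fin n → ℕ} :
    l ∈ strictSeqs n N ↔ (∀ i, l i < N) ∧ StrictAnti l := by
  simp [strictSeqs]

open Finset in
theorem sum_strictSeqs_succ {M : Type*} [AddCommMonoid M] (n N : ℕ) (F : (Fin (n + 1) → ℕ) → M) :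
    ∑ l ∈ strictSeqs (n + 1) N, F l =
      ∑ a ∈ range N, ∑ l ∈ strictSeqs n a, F (Fin.cons a l) := by
  rw [sum_sigma']
  refine (sum_bij' (fun p _ => Fin.cons p.1 p.2) (fun l _ => ⟨l 0, Fin.tail l⟩) ?_ ?_ ?_ ?_ ?_).symm
  · rintro ⟨a, l⟩ h
    simp only [mem_sigma, mem_range, mem_strictSeqs] at h ⊢
    refine ⟨Fin.cases h.1 fun i => (h.2.1 i).trans h.1, ?_⟩
    rw [Fin.strictAnti_iff_succ_lt]
    refine fun i => ?_
    rcases n with _ | n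
    · exact i.elim0
    · refine Fin.cases ?_ (fun i => ?_) i
      · simpa using h.2.1 0
      · simpa using h.2.2 (Fin.castSucc_lt_succ (i := i))
  · intro l h
    simp only [mem_sigma, mem_range, mem_strictSeqs] at h ⊢
    exact ⟨h.1 0, fun i => h.2 (Fin.succ_pos i), fun i j hij => h.2 (Fin.succ_lt_succ_iff.2 hij)⟩
  · rintro ⟨a, l⟩ h
    simp
  · intro l h
    simp
  · intros; rfl

/-- The sum of the maximal minors of the `N × n` matrix of powers of the `x j`. -/
def minorSum {K : Type*} [Field K] {n : ℕ} (x : Fin n → K) (N : ℕ) : K :=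
  ∑ l ∈ strictSeqs n N, (Matrix.of fun i j => x j ^ l i).det

open Finset in
theorem minorSum_succ {K : Type*} [Field K] {n : ℕ} (x : Fin (n + 1) → K) (N : ℕ) :
    minorSum x (N + 1) = minorSum x N +
      ∑ j : Fin (n + 1), (-1) ^ (j : ℕ) * x j ^ N * minorSum (fun i => x (j.succAbove i)) N := by
  simp_rw [minorSum, sum_strictSeqs_succ, sum_range_succ, mul_sum]
  rw [sum_comm (s := univ)]
  congr 1
  refine sum_congr rfl fun l _ => ?_
  rw [Matrix.det_succ_row_zero]
  rfl

open Finset in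
/-- The type `B` Weyl denominator without its Vandermonde factor. -/
def littlewoodDenominator {K : Type*} [Field K] {n : ℕ} (x : Fin n → K) : K :=
  (∏ i, (x i - 1)) * ∏ i, ∏ j ∈ Ioi i, (x i * x j - 1)

theorem littlewoodDenominator_succAbove {K : Type*} [Field K] {n : ℕ} (x : Fin (n + 1) → K)
    (k : Fin (n + 1)) :
    littlewoodDenominator x = (x k - 1) * (∏ i, (x k * x (k.succAbove i) - 1)) *
      littlewoodDenominator fun i => x (k.succAbove i) := by
  rw [littlewoodDenominator, littlewoodDenominator, Fin.prod_univ_succAbove _ k,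
    prod_pairs_succAbove _ k]
  simp_rw [mul_comm (x (k.succAbove _)) (x k), ite_self]
  ring

/-- The bounded Littlewood identity. -/
theorem minorSum_mul_littlewoodDenominator {K : Type*} [Field K] {n : ℕ} {x : Fin n → K}
    (hx : IsGeneric x) (N : ℕ) :
    minorSum x N * littlewoodDenominator x = weylNumerator (fun i => x i ^ N) x := by
  induction n generalizing N with
  | zero =>
    have : strictSeqs 0 N = {Fin.elim0} := by
      ext l
      simp [mem_strictSeqs, Subsingleton.elim l Fin.elim0, Subsingleton.strictAnti]
    simp [minorSum, littlewoodDenominator, weylNumerator, this]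
  | succ n ih =>
    induction N with
    | zero =>
      have : strictSeqs (n + 1) 0 = ∅ := by
        ext l
        simp [mem_strictSeqs]
      simp only [minorSum, this, Finset.sum_empty, zero_mul, pow_zero]
      exact (weylNumerator_one x).symm
    | succ N ihN =>
      have h := hx.weylNumerator_mul_sub fun i => x i ^ N
      simp_rw [pow_succ]
      rw [eq_add_of_sub_eq h, ← ihN, minorSum_succ, add_mul, add_comm, Finset.sum_mul]
      congr 1
      refine Finset.sum_congr rfl fun j _ => ?_
      rw [← ih (hx.succAbove j) N, littlewoodDenominator_succAbove x j]
      ring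

open Polynomial in
theorem exists_monic_pow_sub_pow_eq {R : Type*} [CommRing R] [Nontrivial R] (c : R) (j : ℕ) :
    ∃ p : R[X], p.Monic ∧ p.natDegree = j ∧
      ∀ a b, a * b = c → a ^ (j + 1) - b ^ (j + 1) = (a - b) * p.eval (a + b) := by
  induction j using Nat.twoStepInduction with
  | zero => exact ⟨1, by simp⟩
  | one => exact ⟨X, monic_X, natDegree_X, fun a b _ => by rw [eval_X]; ring⟩
  | more j ih₁ ih₂ =>
    obtain ⟨p, hp, hpd, hpe⟩ := ih₁
    obtain ⟨r, hr, hrd, hre⟩ := ih₂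
    have hmon : (X * r).Monic := monic_X.mul hr
    have hdeg : (X * r).natDegree = j + 2 := by
      rw [monic_X.natDegree_mul hr, natDegree_X, hrd]; ring
    have hlt : (C c * p).natDegree < (X * r).natDegree := by
      rw [hdeg]
      exact (natDegree_C_mul_le c p).trans_lt (by omega)
    refine ⟨X * r - C c * p, ?_, ?_, fun a b hab => ?_⟩
    · exact hmon.sub_of_left (degree_lt_degree hlt)
    · rw [natDegree_sub_eq_left_of_natDegree_lt hlt, hdeg]
    · simp only [eval_sub, eval_mul, eval_X, eval_C]
      rw [← hab] at hpe ⊢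
      linear_combination (a + b) * hre a b hab - a * b * hpe a b rfl

open Finset in
theorem prod_Icc_prod_Icc_add {M : Type*} [CommMonoid M] (n : ℕ) (h : ℕ → M) :
    ∏ i ∈ Icc 1 n, ∏ j ∈ Icc i n, h (i + j) =
      (∏ i : Fin n, h (2 * n - 2 * i)) * ∏ i : Fin n, ∏ j ∈ Ioi i, h (2 * n - i - j) := by
  have h1 : ∀ i ∈ Icc 1 n, ∏ j ∈ Icc i n, h (i + j) = h (i + i) * ∏ j ∈ Ioc i n, h (i + j) := by
    intro i hi
    rw [← Icc_erase_left, mul_prod_erase (Icc i n) (fun j => h (i + j))]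
    exact left_mem_Icc.2 (mem_Icc.1 hi).2
  rw [prod_congr rfl h1, prod_mul_distrib]
  congr 1
  · refine (prod_bij' (fun (i : Fin n) _ => n - i)
      (fun i hi => ⟨n - i, by have := mem_Icc.1 hi; omega⟩) ?_ ?_ ?_ ?_ ?_).symm
    · intro i _
      rw [mem_Icc]
      omega
    · intros; exact mem_univ _
    · intro i _
      ext
      simp only
      omega
    · intro i hi
      have := mem_Icc.1 hi
      simp only
      omega
    · intro i _
      congr 1
      omega
  · rw [prod_sigma', prod_sigma']
    refine (prod_bij' (fun (p : (_ : Fin n) × Fin n) _ => (⟨n - p.2, n - p.1⟩ : (_ : ℕ) × ℕ))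
      (fun p hp => ⟨⟨n - p.2, ?_⟩, ⟨n - p.1, ?_⟩⟩) ?_ ?_ ?_ ?_ ?_).symm
    · have := mem_sigma.1 hp
      rw [mem_Icc, mem_Ioc] at this
      omega
    · have := mem_sigma.1 hp
      rw [mem_Icc] at this
      omega
    · rintro ⟨i, j⟩ h
      simp only [mem_sigma, mem_univ, true_and, mem_Ioi, Fin.lt_def, mem_Icc, mem_Ioc] at h ⊢
      omega
    · rintro ⟨i, j⟩ h
      simp only [mem_sigma, mem_univ, true_and, mem_Ioi, Fin.lt_def, mem_Icc, mem_Ioc] at h ⊢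
      omega
    · rintro ⟨i, j⟩ h
      simp only [Sigma.mk.injEq, Fin.ext_iff, heq_eq_eq]
      omega
    · rintro ⟨i, j⟩ h
      simp only [mem_sigma, mem_Icc, mem_Ioc] at h
      simp only [Sigma.mk.injEq, heq_eq_eq]
      omega
    · rintro ⟨i, j⟩ h
      congr 1
      simp only
      omega

/-- Evaluation of `weylNumerator` at the principal specialization. -/
theorem weylNumerator_pow {K : Type*} [Field K] (q : K) (n : ℕ) :
    ∃ c : K, ∀ m : ℕ, weylNumerator (fun j : Fin n => (q ^ (j + 1 : ℕ)) ^ (m + n))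
        (fun j => q ^ (j + 1 : ℕ)) =
      c * ∏ i ∈ Finset.Icc 1 n, ∏ j ∈ Finset.Icc i n, (1 - q ^ (m + i + j - 1)) := by
  refine ⟨(∏ i : Fin n, -q ^ (i : ℕ)) *
    ∏ i : Fin n, ∏ j ∈ Finset.Ioi i, (q ^ (j : ℕ) - q ^ (i : ℕ)), fun m => ?_⟩
  choose p hp hpd hpe using exists_monic_pow_sub_pow_eq (q ^ (m + 2 * n - 1))
  set a : Fin n → K := fun i => q ^ (m + 2 * n - 1 - i) with ha
  set b : Fin n → K := fun i => q ^ (i : ℕ) with hb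
  have hab : ∀ i, a i * b i = q ^ (m + 2 * n - 1) := by
    intro i
    rw [ha, hb, ← pow_add]
    congr 1
    omega
  have hdet : weylNumerator (fun j : Fin n => (q ^ (j + 1 : ℕ)) ^ (m + n))
      (fun j => q ^ (j + 1 : ℕ)) =
      (∏ i, (a i - b i)) * (Matrix.vandermonde fun i => a i + b i).det := by
    rw [Matrix.det_eval_matrixOfPolynomials_eq_det_vandermonde _ (fun j : Fin n => p j)
      (fun j => hpd j) (fun j => hp j), ← Matrix.det_mul_column, ← Matrix.det_transpose,
      weylNumerator]
    congr 1
    ext j i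
    rw [Matrix.transpose_apply, Matrix.of_apply, Matrix.of_apply, Matrix.of_apply,
      ← hpe j _ _ (hab i), ha, hb]
    simp only [← pow_mul, ← pow_add]
    congr 2
    · rw [← mul_add, mul_comm]
      congr 1
      omega
    · rw [mul_comm]
  have hfac := prod_Icc_prod_Icc_add n fun s => 1 - q ^ (m + s - 1)
  simp only [← add_assoc] at hfac
  rw [hdet, Matrix.det_vandermonde, hfac, mul_mul_mul_comm]
  simp only [← Finset.prod_mul_distrib]
  refine Finset.prod_congr rfl fun i _ => congrArg₂ (· * ·) ?_ ?_
  · have : m + 2 * n - 1 - i = i + (m + (2 * n - 2 * i) - 1) := by omega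
    rw [ha, hb]
    simp only
    rw [this, pow_add]
    ring
  · refine Finset.prod_congr rfl fun j hj => ?_
    have hij : i < j := Finset.mem_Ioi.1 hj
    rw [Fin.lt_def] at hij
    have h1 : m + 2 * n - 1 - i = j + (m + (2 * n - i - j) - 1) := by omega
    have h2 : m + 2 * n - 1 - j = i + (m + (2 * n - i - j) - 1) := by omega
    rw [ha, hb]
    simp only
    rw [h1, h2, pow_add, pow_add]
    ring

open Finset Matrix in
/-- The branching rule for the principally specialized alternants. -/
theorem sum_interlacing_det {R : Type*} [CommRing R] (q : R) {n : ℕ} {l : Fin (n + 1) → ℕ}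
    (hl : Antitone l) :
    (∑ k ∈ Fintype.piFinset fun i : Fin n => Ico (l i.succ) (l i.castSucc),
        (of fun i j : Fin n => (q ^ (j + 1 : ℕ)) ^ k i).det) *
      (∏ j : Fin n, (1 - q ^ (j + 1 : ℕ))) * ∏ i, q ^ l i =
      (of fun i j : Fin (n + 1) => (q ^ (j + 1 : ℕ)) ^ l i).det := by
  have h1 := (detRowAlternating (n := Fin n) (R := R)).toMultilinearMap.map_sum_finset
    (fun (_ : Fin n) (k : ℕ) (j : Fin n) => (q ^ (j + 1 : ℕ)) ^ k)
    (fun i : Fin n => Ico (l i.succ) (l i.castSucc))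
  have h2 : (∑ k ∈ Fintype.piFinset fun i : Fin n => Ico (l i.succ) (l i.castSucc),
        (of fun i j : Fin n => (q ^ (j + 1 : ℕ)) ^ k i).det) =
      (of fun i j : Fin n => ∑ k ∈ Ico (l i.succ) (l i.castSucc), (q ^ (j + 1 : ℕ)) ^ k).det := by
    refine h1.symm.trans ?_
    change det _ = det _
    congr 1
    ext i j
    simp
  have h3 : (of fun i j : Fin (n + 1) => (q ^ (j + 1 : ℕ)) ^ l i).det =
      (∏ i, q ^ l i) * (of fun i j : Fin (n + 1) => (q ^ (j : ℕ)) ^ l i).det := by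
    rw [← det_mul_column]
    congr 1
    ext i j
    simp only [of_apply]
    rw [pow_succ, mul_pow, mul_comm]
  have h4 : (of fun i j : Fin (n + 1) => (q ^ (j : ℕ)) ^ l i).det =
      (of fun i j : Fin (n + 1) => Fin.cases ((q ^ (j : ℕ)) ^ l 0)
        (fun i => (q ^ (j : ℕ)) ^ l i.succ - (q ^ (j : ℕ)) ^ l i.castSucc) i : Matrix _ _ R).det :=
    det_eq_of_forall_row_eq_smul_add_pred (fun _ => 1) (by simp) (by simp)
  rw [h3, h2, mul_comm, mul_comm (det _), ← det_mul_row, h4, det_succ_column_zero,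
    Fin.sum_univ_succ]
  congr 1
  simp only [of_apply, Fin.cases_zero, Fin.cases_succ, Fin.val_zero, pow_zero, one_pow, sub_self,
    mul_zero, zero_mul, sum_const_zero, add_zero, one_mul]
  congr 1
  ext i j
  have h5 := geom_sum_Ico_mul (q ^ (j + 1 : ℕ)) (hl (Fin.castSucc_lt_succ (i := i)).le)
  simp only [of_apply, submatrix_apply, Fin.zero_succAbove, Fin.cases_succ, Fin.val_succ]
  linear_combination -h5

theorem IsPlanePartition.mem_iff_le_stackHeight {P : Finset (ℕ × ℕ × ℕ)} (hP : IsPlanePartition P)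
    {i j k : ℕ} (hi : 1 ≤ i) (hj : 1 ≤ j) (hk : 1 ≤ k) :
    (i, j, k) ∈ P ↔ k ≤ stackHeight P i j := by
  rw [stackHeight]
  refine ⟨fun h => Finset.le_sup (f := fun p : ℕ × ℕ × ℕ => p.2.2) (b := (i, j, k))
    (by simpa using h), fun h => ?_⟩
  rw [Finset.le_sup_iff (show (⊥ : ℕ) < k from hk)] at h
  obtain ⟨⟨a, b, c⟩, h, hc⟩ := h
  simp only [Finset.mem_filter] at h
  obtain ⟨h, rfl, rfl⟩ := h
  exact hP.2 _ h _ _ _ hi le_rfl hj le_rfl hk hc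

theorem IsPlanePartition.isColumnStrict_iff {P : Finset (ℕ × ℕ × ℕ)} (hP : IsPlanePartition P) :
    IsColumnStrict P ↔ ∀ i j k, 1 ≤ i → (i + 1, j, k) ∈ P → (i, j, k + 1) ∈ P := by
  constructor
  · intro h i j k hi hm
    obtain ⟨-, hj, hk⟩ : 1 ≤ i + 1 ∧ 1 ≤ j ∧ 1 ≤ k := hP.1 _ hm
    have h1 := h (i + 1) j (by omega) (hP.2 _ hm _ _ _ (by omega) le_rfl hj le_rfl le_rfl hk)
    rw [hP.mem_iff_le_stackHeight (by omega) hj hk] at hm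
    rw [hP.mem_iff_le_stackHeight hi hj (by omega)]
    rw [Nat.add_sub_cancel] at h1
    omega
  · intro h i j hi hm
    have hj : 1 ≤ j := (hP.1 _ hm).2.1
    obtain ⟨i, rfl⟩ := Nat.exists_eq_add_of_le' (by omega : 1 ≤ i)
    have h1 := (hP.mem_iff_le_stackHeight (by omega) hj le_rfl).1 hm
    have h2 := h i j _ (by omega) ((hP.mem_iff_le_stackHeight (by omega) hj h1).2 le_rfl)
    rw [hP.mem_iff_le_stackHeight (by omega) hj (by omega)] at h2
    simpa using h2

/-- Column strict plane partitions in the box with sides `n`, `m`, `n`, described pointwise. -/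
structure IsBoxed (n m : ℕ) (P : Finset (ℕ × ℕ × ℕ)) : Prop where
  mem_box : ∀ i j k, (i, j, k) ∈ P → 1 ≤ i ∧ i ≤ n ∧ 1 ≤ j ∧ j ≤ m ∧ 1 ≤ k ∧ k ≤ n
  down : ∀ i j k i' j' k', (i, j, k) ∈ P →
    1 ≤ i' → i' ≤ i → 1 ≤ j' → j' ≤ j → 1 ≤ k' → k' ≤ k → (i', j', k') ∈ P
  strict : ∀ i j k, 1 ≤ i → (i + 1, j, k) ∈ P → (i, j, k + 1) ∈ P

/-- The finset of column strict plane partitions in the box with sides `n`, `m`, `n`. -/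
noncomputable def boxed (n m : ℕ) : Finset (Finset (ℕ × ℕ × ℕ)) :=
  (ppBox n m n).powerset.filter fun P => IsPlanePartition P ∧ IsColumnStrict P

theorem mem_boxed {n m : ℕ} {P : Finset (ℕ × ℕ × ℕ)} : P ∈ boxed n m ↔ IsBoxed n m P := by
  rw [boxed, Finset.mem_filter, Finset.mem_powerset]
  constructor
  · rintro ⟨hb, hP, hs⟩
    refine ⟨fun i j k h => ?_, fun i j k i' j' k' h h1 h2 h3 h4 h5 h6 =>
      hP.2 _ h _ _ _ h1 h2 h3 h4 h5 h6, hP.isColumnStrict_iff.1 hs⟩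
    have := hb h
    simp only [ppBox, Finset.mem_product, Finset.mem_Icc] at this
    omega
  · intro h
    have hP : IsPlanePartition P := by
      refine ⟨?_, ?_⟩
      · rintro ⟨i, j, k⟩ hp
        have := h.mem_box _ _ _ hp
        exact ⟨this.1, this.2.2.1, this.2.2.2.2.1⟩
      · rintro ⟨i, j, k⟩ hp i' j' k' h1 h2 h3 h4 h5 h6
        exact h.down _ _ _ _ _ _ hp h1 h2 h3 h4 h5 h6
    refine ⟨?_, hP, hP.isColumnStrict_iff.2 h.strict⟩
    rintro ⟨i, j, k⟩ hp
    have := h.mem_box _ _ _ hp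
    simp only [ppBox, Finset.mem_product, Finset.mem_Icc]
    omega

/-- The length of the `i`-th row of the bottom layer. -/
def bottomRow (P : Finset (ℕ × ℕ × ℕ)) (i : ℕ) : ℕ :=
  (P.filter (fun p => p.1 = i ∧ p.2.2 = 1)).sup (fun p => p.2.1)

theorem le_bottomRow {P : Finset (ℕ × ℕ × ℕ)} {i j : ℕ} (h : (i, j, 1) ∈ P) :
    j ≤ bottomRow P i :=
  Finset.le_sup (f := fun p : ℕ × ℕ × ℕ => p.2.1) (b := (i, j, 1)) (by simpa using h)

/-- The bottom layer of a plane partition, as a strictly decreasing sequence. -/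
def bottomShape (n : ℕ) (P : Finset (ℕ × ℕ × ℕ)) (i : Fin n) : ℕ :=
  bottomRow P (i + 1) + (n - 1 - i)

/-- Remove the bottom layer. -/
def peel (P : Finset (ℕ × ℕ × ℕ)) : Finset (ℕ × ℕ × ℕ) :=
  (P.filter fun p => 2 ≤ p.2.2).image fun p => (p.1, p.2.1, p.2.2 - 1)

/-- The layer at height one with row lengths `r`. -/
def flatLayer (n : ℕ) (r : ℕ → ℕ) : Finset (ℕ × ℕ × ℕ) :=
  ((Finset.Icc 1 n).sigma fun i => Finset.Icc 1 (r i)).image fun p => (p.1, p.2, 1)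

/-- Put a plane partition on top of a flat layer. -/
def pile (n : ℕ) (r : ℕ → ℕ) (P : Finset (ℕ × ℕ × ℕ)) : Finset (ℕ × ℕ × ℕ) :=
  flatLayer n r ∪ P.image fun p => (p.1, p.2.1, p.2.2 + 1)

theorem mem_peel {P : Finset (ℕ × ℕ × ℕ)} {i j k : ℕ} :
    (i, j, k) ∈ peel P ↔ 1 ≤ k ∧ (i, j, k + 1) ∈ P := by
  simp only [peel, Finset.mem_image, Finset.mem_filter, Prod.exists, Prod.mk.injEq]
  constructor
  · rintro ⟨a, b, c, ⟨h, hc⟩, rfl, rfl, rfl⟩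
    refine ⟨by omega, ?_⟩
    rwa [Nat.sub_add_cancel (by omega)]
  · rintro ⟨hk, h⟩
    exact ⟨i, j, k + 1, ⟨h, by omega⟩, rfl, rfl, rfl⟩

theorem mem_flatLayer {n : ℕ} {r : ℕ → ℕ} {i j k : ℕ} :
    (i, j, k) ∈ flatLayer n r ↔ (1 ≤ i ∧ i ≤ n) ∧ (1 ≤ j ∧ j ≤ r i) ∧ k = 1 := by
  simp only [flatLayer, Finset.mem_image, Finset.mem_sigma, Finset.mem_Icc, Sigma.exists,
    Prod.mk.injEq]
  constructor
  · rintro ⟨a, b, ⟨h1, h2⟩, rfl, rfl, rfl⟩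
    exact ⟨h1, h2, rfl⟩
  · rintro ⟨h1, h2, rfl⟩
    exact ⟨i, j, ⟨h1, h2⟩, rfl, rfl, rfl⟩

theorem card_flatLayer (n : ℕ) (r : ℕ → ℕ) :
    (flatLayer n r).card = ∑ i ∈ Finset.Icc 1 n, r i := by
  rw [flatLayer, Finset.card_image_of_injective, Finset.card_sigma]
  · simp
  · rintro ⟨a, b⟩ ⟨c, d⟩ h
    simpa using h

theorem mem_pile {n : ℕ} {r : ℕ → ℕ} {P : Finset (ℕ × ℕ × ℕ)} {i j k : ℕ} :
    (i, j, k) ∈ pile n r P ↔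
      ((1 ≤ i ∧ i ≤ n) ∧ (1 ≤ j ∧ j ≤ r i) ∧ k = 1) ∨ (1 ≤ k ∧ (i, j, k - 1) ∈ P) := by
  rw [pile, Finset.mem_union, mem_flatLayer]
  refine or_congr_right ?_
  simp only [Finset.mem_image, Prod.exists, Prod.mk.injEq]
  constructor
  · rintro ⟨a, b, c, h, rfl, rfl, rfl⟩
    exact ⟨by omega, by simpa using h⟩
  · rintro ⟨hk, h⟩
    exact ⟨i, j, k - 1, h, rfl, rfl, by omega⟩

namespace IsBoxed

variable {n m : ℕ} {P : Finset (ℕ × ℕ × ℕ)}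

theorem mem_iff_le_bottomRow (hP : IsBoxed n m P) {i j : ℕ} (hi : 1 ≤ i) (hj : 1 ≤ j) :
    (i, j, 1) ∈ P ↔ j ≤ bottomRow P i := by
  refine ⟨le_bottomRow, fun h => ?_⟩
  rw [bottomRow, Finset.le_sup_iff (show (⊥ : ℕ) < j from hj)] at h
  obtain ⟨⟨a, b, c⟩, h, hc⟩ := h
  simp only [Finset.mem_filter] at h
  obtain ⟨h, rfl, rfl⟩ := h
  exact hP.down _ _ _ _ _ _ h hi le_rfl hj hc le_rfl le_rfl

theorem add_le (hP : IsBoxed n m P) {i j k : ℕ} (h : (i, j, k) ∈ P) : i + k ≤ n + 1 := by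
  have hi := (hP.mem_box _ _ _ h).1
  induction i, hi using Nat.le_induction generalizing k with
  | base =>
    have := hP.mem_box _ _ _ h
    omega
  | succ i hi ih =>
    have := ih (hP.strict _ _ _ hi h)
    omega

theorem bottomRow_le (hP : IsBoxed n m P) (i : ℕ) : bottomRow P i ≤ m := by
  rw [bottomRow, Finset.sup_le_iff]
  rintro ⟨a, b, c⟩ h
  exact (hP.mem_box _ _ _ (Finset.mem_filter.1 h).1).2.2.2.1

theorem bottomRow_succ_le (hP : IsBoxed n m P) {i : ℕ} (hi : 1 ≤ i) :
    bottomRow P (i + 1) ≤ bottomRow (peel P) i := by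
  rcases Nat.eq_zero_or_pos (bottomRow P (i + 1)) with h | h
  · omega
  · exact le_bottomRow (mem_peel.2 ⟨le_rfl,
      hP.strict _ _ _ hi ((hP.mem_iff_le_bottomRow (by omega) h).2 le_rfl)⟩)

protected theorem peel (hP : IsBoxed (n + 1) m P) : IsBoxed n m (peel P) := by
  refine ⟨fun i j k h => ?_, fun i j k i' j' k' h h1 h2 h3 h4 h5 h6 => ?_, fun i j k hi h => ?_⟩
  · rw [mem_peel] at h
    have h1 := hP.mem_box _ _ _ h.2
    have h2 := hP.add_le h.2
    omega
  · rw [mem_peel] at h ⊢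
    exact ⟨h5, hP.down _ _ _ _ _ _ h.2 h1 h2 h3 h4 (by omega) (by omega)⟩
  · rw [mem_peel] at h ⊢
    exact ⟨by omega, hP.strict _ _ _ hi h.2⟩

theorem bottomRow_peel_le (hP : IsBoxed (n + 1) m P) {i : ℕ} (hi : 1 ≤ i) :
    bottomRow (peel P) i ≤ bottomRow P i := by
  rcases Nat.eq_zero_or_pos (bottomRow (peel P) i) with h | h
  · omega
  · have h1 := (hP.peel.mem_iff_le_bottomRow hi h).2 le_rfl
    exact le_bottomRow (hP.down _ _ _ _ _ _ (mem_peel.1 h1).2 hi le_rfl h le_rfl le_rfl (by omega))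

theorem bottomRow_antitone (hP : IsBoxed n m P) {i : ℕ} (hi : 1 ≤ i) :
    bottomRow P (i + 1) ≤ bottomRow P i := by
  rcases Nat.eq_zero_or_pos (bottomRow P (i + 1)) with h | h
  · omega
  · exact le_bottomRow (hP.down _ _ _ _ _ _
      ((hP.mem_iff_le_bottomRow (by omega) h).2 le_rfl) hi (by omega) h le_rfl le_rfl le_rfl)

theorem bottomShape_mem (hP : IsBoxed n m P) : bottomShape n P ∈ strictSeqs n (m + n) := by
  rw [mem_strictSeqs]
  refine ⟨fun i => ?_, ?_⟩
  · have := hP.bottomRow_le (i + 1)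
    rw [bottomShape]
    omega
  · rcases n with _ | n
    · exact Subsingleton.strictAnti _
    · rw [Fin.strictAnti_iff_succ_lt]
      intro i
      have := hP.bottomRow_antitone (i := i + 1) (by omega)
      simp only [bottomShape, Fin.val_succ, Fin.val_castSucc]
      omega

theorem pile_peel (hP : IsBoxed n m P) {r : ℕ → ℕ}
    (hr : ∀ i, 1 ≤ i → i ≤ n → r i = bottomRow P i) : pile n r (peel P) = P := by
  ext ⟨i, j, k⟩
  rw [mem_pile, mem_peel]
  constructor
  · rintro (⟨⟨h1, h2⟩, ⟨h3, h4⟩, rfl⟩ | ⟨h1, h2, h3⟩)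
    · rw [hr i h1 h2] at h4
      exact (hP.mem_iff_le_bottomRow h1 h3).2 h4
    · rwa [Nat.sub_add_cancel h1] at h3
  · intro h
    have hb := hP.mem_box _ _ _ h
    by_cases hk : k = 1
    · subst hk
      left
      rw [hr i hb.1 hb.2.1]
      exact ⟨⟨hb.1, hb.2.1⟩, ⟨hb.2.2.1, le_bottomRow h⟩, rfl⟩
    · right
      rw [Nat.sub_add_cancel (by omega)]
      exact ⟨by omega, by omega, h⟩

theorem card_pile (hP : IsBoxed n m P) (N : ℕ) (r : ℕ → ℕ) :
    (pile N r P).card = ∑ i ∈ Finset.Icc 1 N, r i + P.card := by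
  rw [pile, Finset.card_union_of_disjoint, card_flatLayer, Finset.card_image_of_injective]
  · rintro ⟨a, b, c⟩ ⟨a', b', c'⟩ h
    simpa using h
  · rw [Finset.disjoint_left]
    rintro ⟨i, j, k⟩ h h'
    rw [mem_flatLayer] at h
    simp only [Finset.mem_image, Prod.exists, Prod.mk.injEq] at h'
    obtain ⟨a, b, c, h1, -, -, h2⟩ := h'
    have := hP.mem_box _ _ _ h1
    omega

theorem peel_pile (hP : IsBoxed n m P) (N : ℕ) (r : ℕ → ℕ) : peel (pile N r P) = P := by
  ext ⟨i, j, k⟩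
  rw [mem_peel, mem_pile]
  constructor
  · rintro ⟨h1, (⟨-, -, h2⟩ | ⟨h2, h3⟩)⟩
    · omega
    · simpa using h3
  · intro h
    have := hP.mem_box _ _ _ h
    exact ⟨by omega, Or.inr ⟨by omega, by simpa using h⟩⟩

theorem bottomRow_pile (hP : IsBoxed n m P) {N i : ℕ} (r : ℕ → ℕ) (h1 : 1 ≤ i) (h2 : i ≤ N) :
    bottomRow (pile N r P) i = r i := by
  apply le_antisymm
  · rw [bottomRow, Finset.sup_le_iff]
    rintro ⟨a, b, c⟩ h
    simp only [Finset.mem_filter, mem_pile] at h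
    obtain ⟨h | h, rfl, rfl⟩ := h
    · exact h.2.1.2
    · have := hP.mem_box _ _ _ h.2
      omega
  · rcases Nat.eq_zero_or_pos (r i) with h | h
    · omega
    · exact le_bottomRow (mem_pile.2 (Or.inl ⟨⟨h1, h2⟩, ⟨h, le_rfl⟩, rfl⟩))

theorem isBoxed_pile (hP : IsBoxed n m P) {r : ℕ → ℕ} (hm : ∀ i, 1 ≤ i → i ≤ n + 1 → r i ≤ m)
    (h₁ : ∀ i, 1 ≤ i → i ≤ n → bottomRow P i ≤ r i)
    (h₂ : ∀ i, 1 ≤ i → i ≤ n → r (i + 1) ≤ bottomRow P i) :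
    IsBoxed (n + 1) m (pile (n + 1) r P) := by
  have hanti : ∀ i i', 1 ≤ i' → i' ≤ i → i ≤ n + 1 → r i ≤ r i' := by
    intro i i' h1 h2
    induction i, h2 using Nat.le_induction with
    | base => exact fun _ => le_rfl
    | succ i hi ih =>
      intro h3
      have := ih (by omega)
      have := h₁ i (by omega) (by omega)
      have := h₂ i (by omega) (by omega)
      omega
  refine ⟨fun i j k h => ?_, fun i j k i' j' k' h h1 h2 h3 h4 h5 h6 => ?_, fun i j k hi h => ?_⟩
  · rw [mem_pile] at h
    rcases h with ⟨⟨h1, h2⟩, ⟨h3, h4⟩, rfl⟩ | ⟨h1, h2⟩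
    · have := hm i h1 h2
      omega
    · have := hP.mem_box _ _ _ h2
      omega
  · rw [mem_pile] at h ⊢
    by_cases hk : k' = 1
    · left
      rcases h with ⟨⟨h7, h8⟩, ⟨h9, h10⟩, rfl⟩ | ⟨h7, h8⟩
      · have := hanti i i' h1 h2 h8
        omega
      · have hb := hP.mem_box _ _ _ h8
        have := hanti i i' h1 h2 (by omega)
        have := h₁ i hb.1 hb.2.1
        have := le_bottomRow (hP.down _ _ _ i j 1 h8 hb.1 le_rfl hb.2.2.1 le_rfl le_rfl
          hb.2.2.2.2.1)
        omega
    · right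
      rcases h with ⟨h7, h8, rfl⟩ | ⟨h7, h8⟩
      · omega
      · exact ⟨h5, hP.down _ _ _ _ _ _ h8 h1 h2 h3 h4 (by omega) (by omega)⟩
  · rw [mem_pile] at h ⊢
    right
    refine ⟨by omega, ?_⟩
    rw [Nat.add_sub_cancel]
    rcases h with ⟨⟨h1, h2⟩, ⟨h3, h4⟩, rfl⟩ | ⟨h1, h2⟩
    · have := h₂ i hi (by omega)
      exact (hP.mem_iff_le_bottomRow hi h3).2 (by omega)
    · have := hP.strict _ _ _ hi h2
      rwa [Nat.sub_add_cancel h1] at this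

end IsBoxed

open Finset in
theorem sum_boxed_succ {R : Type*} [CommSemiring R] (q : R) {n m : ℕ} {l : Fin (n + 1) → ℕ}
    (hl : l ∈ strictSeqs (n + 1) (m + (n + 1))) :
    (∑ P ∈ boxed (n + 1) m with bottomShape (n + 1) P = l, q ^ P.card) *
        (∏ i : Fin (n + 1), q ^ (n - i)) =
      (∏ i, q ^ l i) * ∑ k ∈ Fintype.piFinset fun i : Fin n => Ico (l i.succ) (l i.castSucc),
        ∑ P ∈ boxed n m with bottomShape n P = k, q ^ P.card := by
  rw [mem_strictSeqs] at hl
  obtain ⟨hlt, hanti⟩ := hl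
  set r : ℕ → ℕ := fun i => if h : i - 1 < n + 1 then l ⟨i - 1, h⟩ - (n + 1 - i) else 0 with hr
  have hlr : ∀ i : Fin (n + 1), n - i ≤ l i := by
    intro i
    induction i using Fin.reverseInduction with
    | last => simp
    | cast i ih =>
      have := hanti (Fin.castSucc_lt_succ (i := i))
      simp only [Fin.val_succ, Fin.val_castSucc] at ih ⊢
      omega
  have hri : ∀ i : Fin (n + 1), r (i + 1) = l i - (n - i) := by
    intro i
    simp only [hr, Nat.add_sub_cancel, i.isLt, dif_pos]
    congr 1
    omega
  have hprod : (∏ i, q ^ l i) =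
      q ^ (∑ i ∈ Icc 1 (n + 1), r i) * ∏ i : Fin (n + 1), q ^ (n - i) := by
    have : ∑ i ∈ Icc 1 (n + 1), r i = ∑ i : Fin (n + 1), r (i + 1) := by
      rw [Fin.sum_univ_eq_sum_range (fun i => r (i + 1)), range_eq_Ico, sum_Ico_add']
      rfl
    rw [this, ← prod_pow_eq_pow_sum, ← prod_mul_distrib]
    refine prod_congr rfl fun i _ => ?_
    rw [← pow_add, hri, Nat.sub_add_cancel (hlr i)]
  have hshape : ∀ P, bottomShape (n + 1) P = l → ∀ i, 1 ≤ i → i ≤ n + 1 → r i = bottomRow P i := by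
    intro P hP i h1 h2
    have h3 := congrFun hP ⟨i - 1, by omega⟩
    have h4 := hri ⟨i - 1, by omega⟩
    simp only [bottomShape, Nat.sub_add_cancel h1] at h3 h4
    omega
  have hfiber : ∑ k ∈ Fintype.piFinset fun i : Fin n => Ico (l i.succ) (l i.castSucc),
        ∑ P ∈ boxed n m with bottomShape n P = k, q ^ P.card =
      ∑ P ∈ boxed n m with bottomShape n P ∈
        Fintype.piFinset fun i : Fin n => Ico (l i.succ) (l i.castSucc), q ^ P.card := by
    rw [← sum_fiberwise_of_maps_to (g := bottomShape n)
      (t := Fintype.piFinset fun i : Fin n => Ico (l i.succ) (l i.castSucc))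
      (fun P hP => (mem_filter.1 hP).2)]
    refine sum_congr rfl fun k hk => ?_
    rw [filter_filter]
    refine sum_congr (filter_congr fun P _ => ?_) fun _ _ => rfl
    exact ⟨fun h => ⟨h ▸ hk, h⟩, fun h => h.2⟩
  rw [hprod, hfiber, mul_right_comm, mul_sum]
  congr 1
  refine sum_bij' (fun P _ => peel P) (fun P _ => pile (n + 1) r P) ?_ ?_ ?_ ?_ ?_
  · intro P hP
    rw [mem_filter, mem_boxed] at hP
    rw [mem_filter, mem_boxed, Fintype.mem_piFinset]
    refine ⟨hP.1.peel, fun i => ?_⟩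
    have h1 := hP.1.bottomRow_succ_le (i := i + 1) (by omega)
    have h2 := hP.1.bottomRow_peel_le (i := i + 1) (by omega)
    rw [← hP.2, mem_Ico]
    simp only [bottomShape, Fin.val_succ, Fin.val_castSucc]
    omega
  · intro P hP
    rw [mem_filter, mem_boxed, Fintype.mem_piFinset] at hP
    rw [mem_filter, mem_boxed]
    have hint : ∀ i, 1 ≤ i → i ≤ n → bottomRow P i ≤ r i ∧ r (i + 1) ≤ bottomRow P i := by
      intro i h1 h2
      have h3 := hP.2 ⟨i - 1, by omega⟩
      have h4 := hri (Fin.castSucc ⟨i - 1, by omega⟩)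
      have h5 := hri (Fin.succ ⟨i - 1, by omega⟩)
      simp only [bottomShape, mem_Ico, Fin.val_succ, Fin.val_castSucc,
        Nat.sub_add_cancel h1] at h3 h4 h5
      omega
    refine ⟨hP.1.isBoxed_pile (fun i h1 h2 => ?_) (fun i h1 h2 => (hint i h1 h2).1)
      (fun i h1 h2 => (hint i h1 h2).2), ?_⟩
    · have h3 : r i ≤ r 1 := by
        have h0 : ∀ j : Fin (n + 1), r (j + 1) ≤ r 1 := by
          intro j
          induction j using Fin.induction with
          | zero => exact le_rfl
          | succ j ih =>
            have h4 := hint (j + 1) (by omega) (by omega)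
            simp only [Fin.val_succ, Fin.val_castSucc] at ih ⊢
            omega
        have := h0 ⟨i - 1, by omega⟩
        simpa [Nat.sub_add_cancel h1] using this
      have h4 := hri 0
      have h5 := hlt 0
      simp only [Fin.val_zero, zero_add] at h4
      omega
    · ext i
      rw [bottomShape, hP.1.bottomRow_pile r (by omega) (by omega), hri]
      have := hlr i
      omega
  · intro P hP
    rw [mem_filter, mem_boxed] at hP
    exact hP.1.pile_peel (hshape P hP.2)
  · intro P hP
    rw [mem_filter, mem_boxed] at hP
    exact hP.1.peel_pile _ _
  · intro P hP
    rw [mem_filter, mem_boxed] at hP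
    rw [← pow_add, ← hP.1.peel.card_pile, hP.1.pile_peel (hshape P hP.2)]

theorem boxed_eq_singleton_empty {n m : ℕ} (h : n = 0 ∨ m = 0) : boxed n m = {∅} := by
  ext P
  rw [mem_boxed, Finset.mem_singleton]
  constructor
  · intro hP
    rw [Finset.eq_empty_iff_forall_notMem]
    rintro ⟨i, j, k⟩ hp
    have := hP.mem_box _ _ _ hp
    omega
  · rintro rfl
    constructor <;> simp

section Field

open Finset

variable {K : Type*} [Field K] {q : K}

theorem exists_sum_boxed_eq_mul_det (hq0 : q ≠ 0) (hq : ∀ k : ℕ, 0 < k → q ^ k ≠ 1) (n : ℕ) :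
    ∃ c : K, ∀ m, ∀ l ∈ strictSeqs n (m + n),
      ∑ P ∈ boxed n m with bottomShape n P = l, q ^ P.card =
        c * (Matrix.of fun i j : Fin n => (q ^ (j + 1 : ℕ)) ^ l i).det := by
  induction n with
  | zero =>
    refine ⟨1, fun m l _ => ?_⟩
    rw [boxed_eq_singleton_empty (Or.inl rfl), filter_true_of_mem fun _ _ => Subsingleton.elim _ _]
    simp
  | succ n ih =>
    obtain ⟨c, hc⟩ := ih
    have hd1 : ∏ i : Fin (n + 1), q ^ (n - i : ℕ) ≠ 0 :=
      prod_ne_zero_iff.2 fun i _ => pow_ne_zero _ hq0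
    have hd2 : ∏ j : Fin n, (1 - q ^ (j + 1 : ℕ)) ≠ 0 :=
      prod_ne_zero_iff.2 fun j _ => sub_ne_zero.2 (hq _ (Nat.succ_pos _)).symm
    refine ⟨c / ((∏ i : Fin (n + 1), q ^ (n - i : ℕ)) * ∏ j : Fin n, (1 - q ^ (j + 1 : ℕ))),
      fun m l hl => ?_⟩
    have hanti := (mem_strictSeqs.1 hl).2
    have h1 := sum_boxed_succ q hl
    have h2 : ∀ k ∈ Fintype.piFinset fun i : Fin n => Ico (l i.succ) (l i.castSucc),
        ∑ P ∈ boxed n m with bottomShape n P = k, q ^ P.card =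
          c * (Matrix.of fun i j : Fin n => (q ^ (j + 1 : ℕ)) ^ k i).det := by
      intro k hk
      refine hc m k (mem_strictSeqs.2 ⟨fun i => ?_, ?_⟩)
      · have h3 := (mem_Ico.1 (Fintype.mem_piFinset.1 hk i)).2
        have h4 := hanti.antitone (Fin.zero_le i.castSucc)
        have h5 := (mem_strictSeqs.1 hl).1 0
        omega
      · rcases n with _ | n
        · exact Subsingleton.strictAnti _
        · rw [Fin.strictAnti_iff_succ_lt]
          intro i
          have h3 := (mem_Ico.1 (Fintype.mem_piFinset.1 hk i.succ)).2
          have h4 := (mem_Ico.1 (Fintype.mem_piFinset.1 hk i.castSucc)).1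
          rw [Fin.castSucc_succ] at h3
          omega
    rw [sum_congr rfl h2, ← mul_sum] at h1
    have h3 := sum_interlacing_det q hanti.antitone
    rw [← h3, div_mul_eq_mul_div, eq_div_iff (mul_ne_zero hd1 hd2), ← mul_assoc, h1]
    ring

theorem isGeneric_pow (hq0 : q ≠ 0) (hq : ∀ k : ℕ, 0 < k → q ^ k ≠ 1) (n : ℕ) :
    IsGeneric fun j : Fin n => q ^ (j + 1 : ℕ) := by
  have hlt : ∀ a b : ℕ, a < b → q ^ a ≠ q ^ b := by
    intro a b hab h
    obtain ⟨d, rfl⟩ := Nat.exists_eq_add_of_lt hab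
    rw [add_assoc, pow_add, eq_comm, mul_eq_left₀ (pow_ne_zero _ hq0)] at h
    exact hq _ (Nat.succ_pos d) h
  refine ⟨fun i j h => ?_, fun i => pow_ne_zero _ hq0, fun i j => ?_⟩
  · by_contra hij
    rcases Ne.lt_or_gt hij with hij | hij
    · exact hlt _ _ (by simpa using hij) h
    · exact hlt _ _ (by simpa using hij) h.symm
  · rw [← pow_add]
    exact hq _ (by omega)

theorem IsGeneric.littlewoodDenominator_ne_zero {n : ℕ} {x : Fin n → K} (hx : IsGeneric x) :
    littlewoodDenominator x ≠ 0 :=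
  mul_ne_zero (prod_ne_zero_iff.2 fun i _ => sub_ne_zero.2 (hx.ne_one i))
    (prod_ne_zero_iff.2 fun i _ => prod_ne_zero_iff.2 fun j _ => sub_ne_zero.2 (hx.mul_ne_one i j))

theorem exists_sum_boxed_eq_mul_prod (hq0 : q ≠ 0) (hq : ∀ k : ℕ, 0 < k → q ^ k ≠ 1) (n : ℕ) :
    ∃ c : K, ∀ m, ∑ P ∈ boxed n m, q ^ P.card =
      c * ∏ i ∈ Icc 1 n, ∏ j ∈ Icc i n, (1 - q ^ (m + i + j - 1)) := by
  obtain ⟨c, hc⟩ := exists_sum_boxed_eq_mul_det hq0 hq n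
  obtain ⟨d, hd⟩ := weylNumerator_pow q n
  have hx := isGeneric_pow hq0 hq n
  refine ⟨c * d / littlewoodDenominator fun j : Fin n => q ^ (j + 1 : ℕ), fun m => ?_⟩
  rw [div_mul_eq_mul_div, eq_div_iff hx.littlewoodDenominator_ne_zero, mul_assoc c, ← hd,
    ← minorSum_mul_littlewoodDenominator hx, ← mul_assoc, minorSum, mul_sum,
    ← sum_congr rfl (hc m), sum_fiberwise_of_maps_to]
  exact fun P hP => (mem_boxed.1 hP).bottomShape_mem

theorem sum_boxed_mul_prod (hq0 : q ≠ 0) (hq : ∀ k : ℕ, 0 < k → q ^ k ≠ 1) (n m : ℕ) :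
    (∑ P ∈ boxed n m, q ^ P.card) * ∏ i ∈ Icc 1 n, ∏ j ∈ Icc i n, (1 - q ^ (i + j - 1)) =
      ∏ i ∈ Icc 1 n, ∏ j ∈ Icc i n, (1 - q ^ (m + i + j - 1)) := by
  obtain ⟨c, hc⟩ := exists_sum_boxed_eq_mul_prod hq0 hq n
  have h0 := hc 0
  rw [boxed_eq_singleton_empty (Or.inr rfl)] at h0
  simp only [sum_singleton, card_empty, pow_zero, zero_add] at h0
  rw [hc, mul_right_comm, ← h0, one_mul]

end Field

theorem PowerSeries.sum_boxed_mul_prod (n m : ℕ) :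
    (∑ P ∈ boxed n m, (X : PowerSeries ℚ) ^ P.card) *
        ∏ i ∈ Finset.Icc 1 n, ∏ j ∈ Finset.Icc i n, (1 - (X : PowerSeries ℚ) ^ (i + j - 1)) =
      ∏ i ∈ Finset.Icc 1 n, ∏ j ∈ Finset.Icc i n, (1 - (X : PowerSeries ℚ) ^ (m + i + j - 1)) := by
  have hinj := IsFractionRing.injective (PowerSeries ℚ) (FractionRing (PowerSeries ℚ))
  apply hinj
  have hq : ∀ k : ℕ, 0 < k →
      algebraMap (PowerSeries ℚ) (FractionRing (PowerSeries ℚ)) X ^ k ≠ 1 := by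
    intro k hk h
    rw [← map_pow, ← map_one (algebraMap (PowerSeries ℚ) (FractionRing (PowerSeries ℚ)))] at h
    have := congrArg (constantCoeff (R := ℚ)) (hinj h)
    simp [hk.ne'] at this
  have hq0 : algebraMap (PowerSeries ℚ) (FractionRing (PowerSeries ℚ)) X ≠ 0 := by
    rw [ne_eq, map_eq_zero_iff _ hinj]
    exact X_ne_zero
  simpa using _root_.sum_boxed_mul_prod hq0 hq n m

/-- **The Bender–Knuth conjecture**: the generating function for column strict plane
partitions with `1 ≤ i ≤ n`, `1 ≤ j ≤ m`, `1 ≤ k ≤ n` is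
`∏_{1≤i≤j≤n} (1-q^{m+i+j-1})/(1-q^{i+j-1})` in `ℚ[[q]]`. -/
theorem bender_knuth (m n : ℕ) (hm : 0 < m) (hn : 0 < n) :
    ∑ P ∈ (ppBox n m n).powerset.filter
        (fun P => IsPlanePartition P ∧ IsColumnStrict P),
      (PowerSeries.X : PowerSeries ℚ) ^ P.card =
    ∏ i ∈ Finset.Icc 1 n, ∏ j ∈ Finset.Icc i n,
      (1 - (PowerSeries.X : PowerSeries ℚ) ^ (m + i + j - 1)) *
        (1 - (PowerSeries.X : PowerSeries ℚ) ^ (i + j - 1))⁻¹ := by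
  simp_rw [Finset.prod_mul_distrib]
  rw [← PowerSeries.sum_boxed_mul_prod n m, mul_assoc, ← Finset.prod_mul_distrib,
    Finset.prod_eq_one, mul_one]
  · rfl
  · intro i hi
    rw [← Finset.prod_mul_distrib]
    refine Finset.prod_eq_one fun j hj => PowerSeries.mul_inv_cancel _ ?_
    rw [Finset.mem_Icc] at hi hj
    have : i + j - 1 ≠ 0 := by omega
    simp [this]
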